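/- arXiv:2105.07006 — 2 statements merged into one kernel-verified Lean document; each statement's English description precedes it below -/
import Mathlib

section
/- Let k ≥ 1 and let G be a finite undirected graph whose vertex set is partitioned into parts V_1, …, V_k such that no edge of G joins two vertices of the same part. Construct: a substrate digraph on V(G) containing the edge (w_i, w_j) for every edge {w_i, w_j} of G with w_i ∈ V_i, w_j ∈ V_j and i < j, where every substrate edge has capacity 1 and cost 1, and every node w ∈ V_i has capacity i+1 and cost i+1; a request with nodes v_1, …, v_k, where v_i has demand i+1, and with edges (v_i, v_j) for all 1 ≤ i < j ≤ k, each of demand 1; and the bound k′ := Σ_{i=1}^{k} (i+1)² + k(k−1)/2. Then G contains a clique with exactly one vertex in each part V_i (a multicolored clique) if and only if there exists a valid mapping of the request into the substrate of cost at most k′. -/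
open scoped BigOperators

/-- A simple directed path in a digraph with edge relation `E`, from `a` to `b`,
given as its list of vertices (possibly of length zero, i.e. a single vertex). -/
def IsDiPath {α : Type*} (E : α → α → Prop) (a b : α) (p : List α) : Prop :=
  p.head? = some a ∧ p.getLast? = some b ∧ List.Chain' E p ∧ p.Nodup

/-- The substrate digraph of the Multicolored Clique reduction: an edge from `x` to `y`
whenever `{x, y}` is an edge of `G` and the part of `x` has smaller index than that of `y`. -/
def SubEdge {W : Type*} {k : ℕ} (E : W → W → Prop) (col : W → Fin k) (x y : W) : Prop :=
  E x y ∧ col x < col y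

/-- A candidate mapping of the request of the Multicolored Clique reduction:
node `v_i` (0-indexed: `i : Fin k`, demand `i + 2`) is mapped to `mV i`, and the request edge
`(v_i, v_j)` for `i < j` is mapped to the vertex list `mE i j`. -/
structure MCMapping (W : Type*) (k : ℕ) where
  mV : Fin k → W
  mE : Fin k → Fin k → List W

/-- Validity of a mapping in the Multicolored Clique reduction: node `v_i` is mapped to a
node of capacity at least its demand, i.e. to a part `V_h` with `h ≥ i`, and every request
edge `(v_i, v_j)` with `i < j` is mapped to a simple directed path in the substrate from
`mV i` to `mV j` (possibly of length zero). -/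
def MCMapping.Valid {W : Type*} {k : ℕ} (E : W → W → Prop) (col : W → Fin k)
    (M : MCMapping W k) : Prop :=
  (∀ i : Fin k, (i : ℕ) ≤ (col (M.mV i) : ℕ)) ∧
  ∀ i j : Fin k, i < j → IsDiPath (SubEdge E col) (M.mV i) (M.mV j) (M.mE i j)

/-- The cost of a mapping: each node `v_i` (demand `i + 2`) mapped to a node of `V_h`
(cost `h + 2`) contributes `(i + 2) * (h + 2)`, and each request edge contributes the number
of substrate edges on its path (each of cost `1`, demand `1`). -/
def MCMapping.cost {W : Type*} {k : ℕ} (col : W → Fin k) (M : MCMapping W k) : ℕ :=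
  (∑ i : Fin k, ((i : ℕ) + 2) * ((col (M.mV i) : ℕ) + 2)) +
    ∑ i : Fin k, ∑ j : Fin k, if i < j then (M.mE i j).length - 1 else 0

/-!
Charge to the request node `v_i` its own cost and the lengths of the paths leaving it. If `v_i` is
mapped to `V_h`, so that `h ≥ i`, then a path from the image of `v_i` to that of `v_j` can have
length zero only for `j ≤ h`. Moving `v_i` up from `V_i` to `V_h` therefore saves at most `h - i`
units on the paths, while it raises the node cost by `(i + 1)(h - i)`, which is more unless `h = i`.
Hence every `v_i` is charged at least `(i + 1)²` plus the number of request edges leaving it, with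
equality only if it is mapped to `V_i` and these request edges are mapped to single edges. The
bound `k′` is the sum of these minima.
-/

open Finset

theorem sum_card_Ioi_fin (k : ℕ) : ∑ i : Fin k, #(Ioi i) = k * (k - 1) / 2 := by
  simp only [Fin.card_Ioi]
  rw [Fin.sum_univ_eq_sum_range (fun i => k - 1 - i), sum_range_reflect (fun i => i), sum_range_id]

namespace IsDiPath

variable {α : Type*} {E : α → α → Prop} {a b : α} {p : List α}

theorem pair (hE : E a b) (hne : a ≠ b) : IsDiPath E a b [a, b] :=
  ⟨rfl, rfl, List.isChain_pair.2 hE, by simpa using hne⟩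

theorem two_le_length (h : IsDiPath E a b p) (hne : a ≠ b) : 2 ≤ p.length := by
  obtain ⟨hhead, hlast, -, -⟩ := h
  match p with
  | [] => simp at hhead
  | [x] => simp_all
  | _ :: _ :: _ => simp

theorem rel_of_length_eq_two (h : IsDiPath E a b p) (hp : p.length = 2) : E a b := by
  obtain ⟨x, y, rfl⟩ := List.length_eq_two.1 hp
  obtain ⟨hhead, hlast, hchain, -⟩ := h
  obtain rfl : x = a := by simpa using hhead
  obtain rfl : y = b := by simpa using hlast
  exact List.isChain_pair.1 hchain

end IsDiPath

namespace MCMapping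

variable {W : Type*} {k : ℕ} {E : W → W → Prop} {col : W → Fin k} {M : MCMapping W k}
  {f : Fin k → W} {i j : Fin k}

/-- The part of the cost of a mapping charged to the request node `v_i`: its node cost and the
lengths of the paths representing the request edges `(v_i, v_j)`, `i < j`. -/
def costAt (col : W → Fin k) (M : MCMapping W k) (i : Fin k) : ℕ :=
  ((i : ℕ) + 2) * ((col (M.mV i) : ℕ) + 2) + ∑ j ∈ Ioi i, ((M.mE i j).length - 1)

theorem cost_eq_sum_costAt (col : W → Fin k) (M : MCMapping W k) :
    M.cost col = ∑ i, M.costAt col i := by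
  simp only [cost, costAt, sum_add_distrib, ← sum_filter, filter_lt_eq_Ioi]

/-- The least cost `costAt` can charge to `v_i`, attained when `v_i` is mapped to `V_i` and the
request edges leaving it are mapped to single substrate edges. -/
def minCostAt (i : Fin k) : ℕ := ((i : ℕ) + 2) ^ 2 + #(Ioi i)

theorem sum_minCostAt (k : ℕ) :
    ∑ i : Fin k, minCostAt i = (∑ i : Fin k, ((i : ℕ) + 2) ^ 2) + k * (k - 1) / 2 := by
  simp only [minCostAt, sum_add_distrib, sum_card_Ioi_fin]

/-- The mapping `v_i ↦ f i` that represents each request edge by a single substrate edge. -/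
def direct (f : Fin k → W) : MCMapping W k where
  mV := f
  mE i j := [f i, f j]

theorem direct_valid (hcol : ∀ i, col (f i) = i) (hE : ∀ i j, i < j → E (f i) (f j)) :
    (direct f).Valid E col := by
  refine ⟨fun i => (congrArg Fin.val (hcol i)).ge, fun i j hij => .pair ⟨hE i j hij, ?_⟩ ?_⟩
  · simpa only [direct, hcol] using hij
  · exact (Function.LeftInverse.injective hcol).ne hij.ne

theorem costAt_direct (hcol : col (f i) = i) : (direct f).costAt col i = minCostAt i := by
  simp [costAt, minCostAt, direct, hcol, sq]

namespace Valid

theorem one_le_length_sub_one (hM : M.Valid E col) (hij : i < j) (hj : col (M.mV i) < j) :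
    1 ≤ (M.mE i j).length - 1 := by
  have hne : M.mV i ≠ M.mV j := fun h => (hM.1 j).not_gt (h ▸ hj)
  have := (hM.2 i j hij).two_le_length hne
  omega

theorem card_Ioi_col_le (hM : M.Valid E col) (i : Fin k) :
    #(Ioi (col (M.mV i))) ≤ ∑ j ∈ Ioi i, ((M.mE i j).length - 1) := by
  have hsub : Ioi (col (M.mV i)) ⊆ Ioi i := Ioi_subset_Ioi (hM.1 i)
  calc #(Ioi (col (M.mV i)))
      = ∑ j ∈ Ioi (col (M.mV i)), 1 := card_eq_sum_ones _
    _ ≤ ∑ j ∈ Ioi (col (M.mV i)), ((M.mE i j).length - 1) := sum_le_sum fun j hj =>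
        hM.one_le_length_sub_one (mem_Ioi.1 (hsub hj)) (mem_Ioi.1 hj)
    _ ≤ ∑ j ∈ Ioi i, ((M.mE i j).length - 1) := sum_le_sum_of_subset hsub

theorem minCostAt_add_le_costAt (hM : M.Valid E col) (i : Fin k) :
    minCostAt i + (col (M.mV i) - i : ℕ) ≤ M.costAt col i := by
  have hpaths := hM.card_Ioi_col_le i
  obtain ⟨d, hd⟩ := Nat.exists_eq_add_of_le (hM.1 i)
  have hcard : #(Ioi i) ≤ #(Ioi (col (M.mV i))) + d := by
    simp only [Fin.card_Ioi]
    omega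
  have hnode : ((i : ℕ) + 2) ^ 2 + 2 * d ≤ (i + 2) * (i + d + 2) := by
    nlinarith [Nat.zero_le (i * d)]
  rw [minCostAt, costAt, hd]
  omega

theorem costAt_eq_of_cost_le (hM : M.Valid E col) (hcost : M.cost col ≤ ∑ i : Fin k, minCostAt i)
    (i : Fin k) : M.costAt col i = minCostAt i := by
  have hle : ∀ i ∈ univ, minCostAt i ≤ M.costAt col i := fun i _ =>
    Nat.le_of_add_right_le (hM.minCostAt_add_le_costAt i)
  rw [cost_eq_sum_costAt] at hcost
  exact ((sum_eq_sum_iff_of_le hle).1 (hcost.antisymm' (sum_le_sum hle)) i (mem_univ i)).symm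

theorem col_eq_of_costAt_eq (hM : M.Valid E col) (hi : M.costAt col i = minCostAt i) :
    col (M.mV i) = i := by
  have := hM.minCostAt_add_le_costAt i
  have := hM.1 i
  omega

theorem edge_of_costAt_eq (hM : M.Valid E col) (hi : M.costAt col i = minCostAt i)
    (hij : i < j) : E (M.mV i) (M.mV j) := by
  have hcol := hM.col_eq_of_costAt_eq hi
  have hone : ∀ j ∈ Ioi i, 1 ≤ (M.mE i j).length - 1 := fun j hj =>
    hM.one_le_length_sub_one (mem_Ioi.1 hj) (hcol.trans_lt (mem_Ioi.1 hj))
  have hsum : ∑ j ∈ Ioi i, 1 = ∑ j ∈ Ioi i, ((M.mE i j).length - 1) := by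
    rw [costAt, minCostAt, hcol, ← sq, card_eq_sum_ones] at hi
    exact (Nat.add_left_cancel hi).symm
  have hlength : 1 = (M.mE i j).length - 1 :=
    (sum_eq_sum_iff_of_le hone).1 hsum j (mem_Ioi.2 hij)
  exact ((hM.2 i j hij).rel_of_length_eq_two (by omega)).1

end Valid

end MCMapping

theorem multicoloredClique_iff_validMapping_general {W : Type*} (k : ℕ) (E : W → W → Prop)
    (col : W → Fin k) :
    (∃ f : Fin k → W, (∀ i, col (f i) = i) ∧ ∀ i j, i < j → E (f i) (f j)) ↔
      (∃ M : MCMapping W k, M.Valid E col ∧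
        M.cost col ≤ (∑ i : Fin k, ((i : ℕ) + 2) ^ 2) + k * (k - 1) / 2) := by
  simp only [← MCMapping.sum_minCostAt]
  constructor
  · rintro ⟨f, hcol, hE⟩
    refine ⟨.direct f, MCMapping.direct_valid hcol hE, ?_⟩
    rw [MCMapping.cost_eq_sum_costAt]
    exact sum_le_sum fun i _ => (MCMapping.costAt_direct (hcol i)).le
  · rintro ⟨M, hM, hcost⟩
    have hmin := hM.costAt_eq_of_cost_le hcost
    exact ⟨M.mV, fun i => hM.col_eq_of_costAt_eq (hmin i),
      fun i j hij => hM.edge_of_costAt_eq (hmin i) hij⟩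

/-- Correctness of the Multicolored Clique reduction: `G` (with parts given by `col`, no edge
inside a part) has a multicolored clique iff the constructed VMP instance admits a valid
mapping of cost at most `k′ = ∑_{i=1}^{k} (i+1)² + k(k-1)/2`. -/
theorem multicoloredClique_iff_validMapping {W : Type*} [Fintype W] [DecidableEq W]
    (k : ℕ) (hk : 1 ≤ k) (E : W → W → Prop) (hsymm : Symmetric E) (col : W → Fin k)
    (hpart : ∀ x y, E x y → col x ≠ col y) :
    (∃ f : Fin k → W, (∀ i, col (f i) = i) ∧ ∀ i j, i ≠ j → E (f i) (f j)) ↔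
      (∃ M : MCMapping W k, M.Valid E col ∧
        M.cost col ≤ (∑ i : Fin k, ((i : ℕ) + 2) ^ 2) + k * (k - 1) / 2) := by
  have : Std.Symm E := ⟨hsymm⟩
  rw [← multicoloredClique_iff_validMapping_general k E col]
  exact exists_congr fun f => and_congr_right fun _ => Std.Symm.pairwise_on f
end

section
/- Let k ≥ 1 and let G be a finite undirected graph whose vertex set is partitioned into parts V_1, …, V_k such that no edge of G joins two vertices of the same part, and consider the substrate, request, and bound k′ := Σ_{i=1}^{k} (i+1)² + k(k−1)/2 constructed from (G, k) as in the Multicolored Clique reduction. Then every valid mapping of the request into the substrate has cost at least k′; more precisely, if for each i, x_i denotes the number of request edges leaving v_i that are mapped onto paths of length zero, then the cost of the mapping is at least Σ_{i=1}^{k} (i+1)² + k(k−1)/2 + Σ_{i=1}^{k} i·x_i. -/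
open scoped BigOperators

/-!
Suppose `v_i` is mapped into `V_h`, and `x` of the request edges leaving it are mapped to paths of
length zero. The targets of these `x` edges share the image of `v_i`, so by capacity they have
indices in `(i, h]`, whence `h ≥ i + x` and the node cost `(i + 1)(h + 1)` exceeds `(i + 1)²` by at
least `(i + 1) x`. The other `k - i - x` edges leaving `v_i` cost at least `1` each, so the `x`
collapsed edges save at most `x` and a surplus of `i x` remains. Summing over `i` gives the bound.
-/

open Finset

namespace IsDiPath

variable {α : Type*} {D : α → α → Prop} {a b : α} {p : List α}

theorem length_pos (hp : IsDiPath D a b p) : 0 < p.length :=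
  List.length_pos_iff_exists_mem.2 ⟨a, List.mem_of_head? hp.1⟩

theorem eq_of_length_eq_one (hp : IsDiPath D a b p) (hlen : p.length = 1) : a = b := by
  obtain ⟨c, rfl⟩ := List.length_eq_one_iff.1 hlen
  obtain ⟨hhead, hlast, -, -⟩ := hp
  simp_all

end IsDiPath

namespace MCMapping

variable {W : Type*} {k : ℕ}

/-- The indices `j > i` for which the request edge `(v_i, v_j)` is mapped to a path of length zero,
that is, to a list with a single vertex; their number is the `x_i` of the cost bound. -/
def collapsed (M : MCMapping W k) (i : Fin k) : Finset (Fin k) :=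
  univ.filter fun j ↦ i < j ∧ (M.mE i j).length = 1

/-- The part of the cost of a mapping that is due to the request edges leaving `v_i`. -/
def outEdgeCost (M : MCMapping W k) (i : Fin k) : ℕ :=
  ∑ j ∈ Ioi i, ((M.mE i j).length - 1)

theorem cost_eq_sum (col : W → Fin k) (M : MCMapping W k) :
    M.cost col = ∑ i : Fin k, (((i : ℕ) + 2) * ((col (M.mV i) : ℕ) + 2) + M.outEdgeCost i) := by
  simp only [cost, outEdgeCost, sum_add_distrib, ← sum_filter, filter_lt_eq_Ioi]

variable {D : W → W → Prop} {col : W → Fin k} {M : MCMapping W k}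

theorem collapsed_subset_Ioc (hcap : ∀ i, i ≤ col (M.mV i))
    (hpath : ∀ i j, i < j → IsDiPath D (M.mV i) (M.mV j) (M.mE i j)) (i : Fin k) :
    M.collapsed i ⊆ Ioc i (col (M.mV i)) := by
  intro j hj
  obtain ⟨hij, hlen⟩ : i < j ∧ (M.mE i j).length = 1 := by simpa [collapsed] using hj
  have himage : M.mV i = M.mV j := (hpath i j hij).eq_of_length_eq_one hlen
  exact mem_Ioc.2 ⟨hij, himage ▸ hcap j⟩

theorem add_card_collapsed_le (hcap : ∀ i, i ≤ col (M.mV i))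
    (hpath : ∀ i j, i < j → IsDiPath D (M.mV i) (M.mV j) (M.mE i j)) (i : Fin k) :
    (i : ℕ) + #(M.collapsed i) ≤ col (M.mV i) := by
  have hcard : #(M.collapsed i) ≤ (col (M.mV i) : ℕ) - i :=
    (card_le_card (collapsed_subset_Ioc hcap hpath i)).trans_eq (Fin.card_Ioc _ _)
  have hle : (i : ℕ) ≤ col (M.mV i) := hcap i
  omega

theorem card_Ioi_le_card_collapsed_add_outEdgeCost
    (hpath : ∀ i j, i < j → IsDiPath D (M.mV i) (M.mV j) (M.mE i j)) (i : Fin k) :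
    #(Ioi i) ≤ #(M.collapsed i) + M.outEdgeCost i := by
  have hcollapsed : M.collapsed i = (Ioi i).filter fun j ↦ (M.mE i j).length = 1 := by
    ext j
    simp [collapsed]
  rw [hcollapsed, outEdgeCost, card_eq_sum_ones, card_filter, ← sum_add_distrib]
  refine sum_le_sum fun j hj ↦ ?_
  have hpos : 0 < (M.mE i j).length := (hpath i j (mem_Ioi.1 hj)).length_pos
  split_ifs <;> omega

theorem local_cost_lower_bound (hcap : ∀ i, i ≤ col (M.mV i))
    (hpath : ∀ i j, i < j → IsDiPath D (M.mV i) (M.mV j) (M.mE i j)) (i : Fin k) :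
    ((i : ℕ) + 2) ^ 2 + #(Ioi i) + ((i : ℕ) + 1) * #(M.collapsed i) ≤
      ((i : ℕ) + 2) * ((col (M.mV i) : ℕ) + 2) + M.outEdgeCost i :=
  calc ((i : ℕ) + 2) ^ 2 + #(Ioi i) + ((i : ℕ) + 1) * #(M.collapsed i)
    _ ≤ ((i : ℕ) + 2) ^ 2 + (#(M.collapsed i) + M.outEdgeCost i) +
          ((i : ℕ) + 1) * #(M.collapsed i) := by
      gcongr
      exact card_Ioi_le_card_collapsed_add_outEdgeCost hpath i
    _ = ((i : ℕ) + 2) * ((i : ℕ) + #(M.collapsed i) + 2) + M.outEdgeCost i := by ring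
    _ ≤ ((i : ℕ) + 2) * ((col (M.mV i) : ℕ) + 2) + M.outEdgeCost i := by
      gcongr
      exact add_card_collapsed_le hcap hpath i

end MCMapping

theorem validMapping_cost_lower_bound_general {W : Type*} {k : ℕ} {D : W → W → Prop}
    {col : W → Fin k} {M : MCMapping W k} (hcap : ∀ i, i ≤ col (M.mV i))
    (hpath : ∀ i j, i < j → IsDiPath D (M.mV i) (M.mV j) (M.mE i j)) :
    (∑ i : Fin k, ((i : ℕ) + 2) ^ 2) + k * (k - 1) / 2 +
        (∑ i : Fin k, ((i : ℕ) + 1) * #(M.collapsed i)) ≤ M.cost col := by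
  rw [← sum_card_Ioi_fin, ← sum_add_distrib, ← sum_add_distrib, M.cost_eq_sum]
  exact sum_le_sum fun i _ ↦ MCMapping.local_cost_lower_bound hcap hpath i

/-- Cost lower bound in the Multicolored Clique reduction: every valid mapping has cost at
least `k′ = ∑_{i=1}^{k} (i+1)² + k(k-1)/2`; more precisely, with `x_i` the number of request
edges leaving `v_i` that are mapped onto paths of length zero, the cost is at least
`k′ + ∑_{i=1}^{k} i · x_i`. -/
theorem validMapping_cost_lower_bound {W : Type*} [Fintype W] [DecidableEq W]
    (k : ℕ) (hk : 1 ≤ k) (E : W → W → Prop) (hsymm : Symmetric E) (col : W → Fin k)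
    (hpart : ∀ x y, E x y → col x ≠ col y)
    (M : MCMapping W k) (hM : M.Valid E col) :
    ((∑ i : Fin k, ((i : ℕ) + 2) ^ 2) + k * (k - 1) / 2 ≤ M.cost col) ∧
    ((∑ i : Fin k, ((i : ℕ) + 2) ^ 2) + k * (k - 1) / 2 +
        (∑ i : Fin k, ((i : ℕ) + 1) *
          (Finset.univ.filter (fun j : Fin k => i < j ∧ (M.mE i j).length = 1)).card)
      ≤ M.cost col) := by
  have hbound := validMapping_cost_lower_bound_general hM.1 hM.2
  exact ⟨le_of_add_le_left hbound, hbound⟩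
end
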